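/- Let θ, φ ∈ ℝ and μ ∈ ℝ, and let H(θ,φ) = μ·sin θ · [[−sin θ, 0, 0, −i·cos θ·e^{iφ}], [0, 0, 0, 0], [0, 0, 0, 0], [i·cos θ·e^{−iφ}, 0, 0, sin θ]]. Then the characteristic polynomial of H(θ,φ) is X²·(X² − μ²·sin²θ); in particular the eigenvalues of H(θ,φ) are ±μ·sin θ together with 0 of multiplicity two. -/

import Mathlib

/-!
Only the first and last rows of `H` are nonzero, so its characteristic polynomial is `X ^ 2` times
that of the corner `2 × 2` block. That block is `μ sin θ` times a reflection `n · σ`, where `n` is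
a unit vector and `σ` are the Pauli matrices. Since `n · σ` has trace `0` and determinant
`-|n| ^ 2 = -1`, the block has characteristic polynomial `X ^ 2 - (μ sin θ) ^ 2`.
-/

open Matrix Complex Polynomial

/-- The Hamiltonian H(θ,φ) obtained from the gate R̆(θ,φ) with φ time-dependent,
μ playing the role of φ̇. -/
noncomputable def Hθφ (θ φ μ : ℝ) : Matrix (Fin 4) (Fin 4) ℂ :=
  ((μ * Real.sin θ : ℝ) : ℂ) •
    !![-(Real.sin θ : ℂ), 0, 0, -(Complex.I * (Real.cos θ : ℂ) * Complex.exp (Complex.I * φ));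
       0, 0, 0, 0;
       0, 0, 0, 0;
       Complex.I * (Real.cos θ : ℂ) * Complex.exp (-(Complex.I * φ)), 0, 0, (Real.sin θ : ℂ)]

section Charpoly

variable {R m n : Type*} [CommRing R] [Fintype m] [DecidableEq m] [Fintype n] [DecidableEq n]

theorem charpoly_eq_X_pow_mul_charpoly_submatrix (M : Matrix n n R) (f : m ↪ n)
    (hM : ∀ i ∉ Set.range f, M i = 0) :
    M.charpoly = X ^ (Fintype.card n - Fintype.card m) * (M.submatrix f f).charpoly := by
  classical
  let e : m ⊕ ↥(Set.range f)ᶜ ≃ n :=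
    (Equiv.sumCongr (Equiv.ofInjective f f.injective) (Equiv.refl _)).trans
      (Equiv.Set.sumCompl (Set.range f))
  have blocks : M.submatrix e e =
      fromBlocks (M.submatrix f f) (M.submatrix f Subtype.val) 0 0 := by
    ext (i | i) (j | j)
    · rfl
    · rfl
    · exact congrFun (hM i i.2) (f j)
    · exact congrFun (hM i i.2) j
  calc M.charpoly = (M.submatrix e e).charpoly := (charpoly_reindex e.symm M).symm
    _ = (M.submatrix f f).charpoly * X ^ Fintype.card ↥(Set.range f)ᶜ := by
      rw [blocks, charpoly_fromBlocks_zero₂₁, charpoly_zero]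
    _ = X ^ (Fintype.card n - Fintype.card m) * (M.submatrix f f).charpoly := by
      rw [Fintype.card_compl_set, Set.card_range_of_injective f.injective, mul_comm]

theorem charpoly_fin_two_of_trace_eq_zero (A : Matrix (Fin 2) (Fin 2) R)
    (hA : A.trace = 0) : A.charpoly = X ^ 2 + C A.det := by
  nontriviality R
  rw [charpoly_fin_two, hA, C_0, zero_mul, sub_zero]

end Charpoly

/-- The matrix `n · σ` (with `σ` the Pauli matrices) of the vector
`n = (cos θ sin φ, cos θ cos φ, -sin θ)`, which is the corner block of `Hθφ` without its scalar
factor. The angles are allowed to be complex. -/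
noncomputable def pauliReflection (θ φ : ℂ) : Matrix (Fin 2) (Fin 2) ℂ :=
  !![-sin θ, -(I * cos θ * exp (I * φ)); I * cos θ * exp (-(I * φ)), sin θ]

theorem trace_pauliReflection (θ φ : ℂ) : (pauliReflection θ φ).trace = 0 := by
  rw [pauliReflection, trace_fin_two_of, neg_add_cancel]

theorem det_pauliReflection (θ φ : ℂ) : (pauliReflection θ φ).det = -1 := by
  have phases_cancel : exp (I * φ) * exp (-(I * φ)) = 1 := by
    rw [← exp_add, add_neg_cancel, exp_zero]
  rw [pauliReflection, det_fin_two_of]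
  linear_combination I ^ 2 * cos θ ^ 2 * phases_cancel + cos θ ^ 2 * I_sq - sin_sq_add_cos_sq θ

theorem charpoly_smul_pauliReflection (a θ φ : ℂ) :
    (a • pauliReflection θ φ).charpoly = X ^ 2 - C (a ^ 2) := by
  have trace_eq_zero : (a • pauliReflection θ φ).trace = 0 := by
    rw [trace_smul, trace_pauliReflection, smul_zero]
  rw [charpoly_fin_two_of_trace_eq_zero _ trace_eq_zero, det_smul, det_pauliReflection,
    Fintype.card_fin, mul_neg_one, C_neg, sub_eq_add_neg]

theorem Hθφ_submatrix_corner (θ φ μ : ℝ) :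
    (Hθφ θ φ μ).submatrix ![0, 3] ![0, 3] = ((μ : ℂ) * sin θ) • pauliReflection θ φ := by
  ext i j
  fin_cases i <;> fin_cases j <;> simp [Hθφ, pauliReflection]

theorem Hθφ_row_eq_zero (θ φ μ : ℝ) {i : Fin 4} (hi : i ∉ Set.range ![0, 3]) :
    Hθφ θ φ μ i = 0 := by
  ext j
  fin_cases i <;> fin_cases j <;> simp_all [Hθφ]

/-- The characteristic polynomial of H(θ,φ) is X²·(X² − μ²·sin²θ); in particular its
eigenvalues are ±μ·sin θ and 0 with multiplicity two. -/
theorem Hθφ_charpoly (θ φ μ : ℝ) :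
    (Hθφ θ φ μ).charpoly
      = X ^ 2 * (X ^ 2 - C (((μ : ℂ)) ^ 2 * ((Real.sin θ : ℂ)) ^ 2)) := by
  let corner : Fin 2 ↪ Fin 4 := ⟨![0, 3], by decide⟩
  calc (Hθφ θ φ μ).charpoly
      = X ^ 2 * ((Hθφ θ φ μ).submatrix corner corner).charpoly :=
        charpoly_eq_X_pow_mul_charpoly_submatrix _ corner fun _ ↦ Hθφ_row_eq_zero θ φ μ
    _ = X ^ 2 * (((μ : ℂ) * sin θ) • pauliReflection θ φ).charpoly :=
        congrArg (X ^ 2 * ·.charpoly) (Hθφ_submatrix_corner θ φ μ)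
    _ = X ^ 2 * (X ^ 2 - C ((μ : ℂ) ^ 2 * (Real.sin θ : ℂ) ^ 2)) := by
        rw [charpoly_smul_pauliReflection, mul_pow, ofReal_sin]
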